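/- arXiv:2602.19015 — 6 statements merged into one kernel-verified Lean document; each statement's English description precedes it below -/
import Mathlib

section
/- Let V : (0, ∞) → ℝ be continuous and suppose: (i) there exist C > −1/4 and a function ρ with V(x) = C/x² + ρ(x) for x ∈ (0, 2) and lim_{x → 0⁺} x²·ρ(x) = 0; (ii) there exist L ≥ 0 and W ∈ L¹((1, ∞)) with V(x) = L/x² + W(x) for x > 1. Then there exist constants a > 0 and b ≥ 0 such that for every smooth compactly supported u : (0, ∞) → ℂ, ∫₀^∞ (|u′(x)|² + V(x)·|u(x)|²) dx ≥ a·∫₀^∞ |u′(x)|² dx − b·∫₀^∞ |u(x)|² dx. -/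
/-!
Write `‖·‖` for the modulus and integrate over `(0, ∞)`. The hypotheses give a pointwise bound
`V x ≥ -c / x² - B - w x` with `0 ≤ c < 1/4`, `B ≥ 0` and `w = |W|` on `(1, ∞)`, `w = 0` elsewhere:
near `0` the perturbation `ρ` is absorbed by the gap between `C` and `-1/4`, on the
remaining compact part of `(0, 1]` the potential is bounded by continuity, and beyond `1` the
centrifugal term `L / x²` is nonnegative (`potential_lower_bound`).

The term `c / x²` is controlled by Hardy's inequality `∫ ‖u‖² / x² ≤ 4 ∫ ‖u'‖²` (`hardy`), which
costs only the fraction `4c < 1` of the kinetic energy. The term `w` is controlled by Agmon's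
inequality `‖u x‖² ≤ ε ∫ ‖u'‖² + ε⁻¹ ∫ ‖u‖²` (`agmon`), so `∫ w ‖u‖²` is at most `∫ w` times the
right-hand side, and `ε` is taken small enough for a fraction of the kinetic energy to survive.
-/

open MeasureTheory Set Filter

/-- Test functions on the open half-line, extended by zero to `ℝ`. -/
structure IsTest (u : ℝ → ℂ) : Prop where
  smooth : ContDiff ℝ (⊤ : ℕ∞) u
  compact : HasCompactSupport u
  supp : tsupport u ⊆ Ioi 0

namespace IsTest

variable {u : ℝ → ℂ}

lemma hasDerivAt (hu : IsTest u) (x : ℝ) : HasDerivAt u (deriv u x) x :=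
  ((hu.smooth.differentiable (by simp)) x).hasDerivAt

lemma continuous_deriv (hu : IsTest u) : Continuous (deriv u) :=
  hu.smooth.continuous_deriv (by simp)

lemma hasDerivAt_normSq (hu : IsTest u) (x : ℝ) :
    HasDerivAt (fun x => ‖u x‖ ^ 2) (2 * inner ℝ (u x) (deriv u x)) x :=
  (hu.hasDerivAt x).norm_sq

/-- A weight that may be singular at `0` becomes continuous after multiplication by `‖u‖²`,
since `u` vanishes near `0`. -/
lemma continuous_weight (hu : IsTest u) {f : ℝ → ℝ} (hf : ContinuousOn f (Ioi 0)) :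
    Continuous (fun x => f x * ‖u x‖ ^ 2) := by
  rw [continuous_iff_continuousAt]
  intro x
  by_cases hx : x ∈ Ioi (0 : ℝ)
  · exact (hf.continuousAt (Ioi_mem_nhds hx)).mul
      ((hu.smooth.continuous.norm.pow 2).continuousAt)
  · have h0 : u =ᶠ[nhds x] 0 := notMem_tsupport_iff_eventuallyEq.1 fun h => hx (hu.supp h)
    have h1 : (fun _ : ℝ => (0 : ℝ)) =ᶠ[nhds x] fun x => f x * ‖u x‖ ^ 2 := by
      filter_upwards [h0] with y hy
      simp [hy]
    exact continuousAt_const.congr h1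

lemma hasCompactSupport_weight (hu : IsTest u) (f : ℝ → ℝ) :
    HasCompactSupport (fun x => f x * ‖u x‖ ^ 2) :=
  hu.compact.mono fun x hx => by
    contrapose! hx
    simp [Function.notMem_support.1 hx]

lemma integrable_weight (hu : IsTest u) {f : ℝ → ℝ} (hf : ContinuousOn f (Ioi 0)) :
    Integrable (fun x => f x * ‖u x‖ ^ 2) :=
  (hu.continuous_weight hf).integrable_of_hasCompactSupport (hu.hasCompactSupport_weight f)

lemma integrable_normSq (hu : IsTest u) : Integrable (fun x => ‖u x‖ ^ 2) := by
  simpa using hu.integrable_weight (f := fun _ => 1) continuousOn_const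

lemma integrable_deriv (hu : IsTest u) : Integrable (fun x => ‖deriv u x‖ ^ 2) := by
  refine (hu.continuous_deriv.norm.pow 2).integrable_of_hasCompactSupport
    (hu.compact.deriv.mono fun x hx => ?_)
  contrapose! hx
  simp [Function.notMem_support.1 hx]

lemma integrable_inner (hu : IsTest u) : Integrable (fun x => 2 * inner ℝ (u x) (deriv u x)) := by
  refine (continuous_const.mul
    (hu.smooth.continuous.inner hu.continuous_deriv)).integrable_of_hasCompactSupport
    (hu.compact.mono fun x hx => ?_)
  contrapose! hx
  simp [Function.notMem_support.1 hx]

lemma tendsto_weight (hu : IsTest u) (f : ℝ → ℝ) :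
    Tendsto (fun x => f x * ‖u x‖ ^ 2) atTop (nhds 0) :=
  tendsto_const_nhds.congr' (((hasCompactSupport_iff_eventuallyEq.1
    (hu.hasCompactSupport_weight f)).filter_mono (by
      rw [coclosedCompact_eq_cocompact]; exact atTop_le_cocompact)).symm)

/-- Hardy's inequality, obtained by integrating the identity
`‖u' - u / (2x)‖² = ‖u'‖² - ‖u‖² / (4x²) - (‖u‖² / x)' / 2`. -/
lemma hardy (hu : IsTest u) :
    ∫ x in Ioi (0 : ℝ), (x ^ 2)⁻¹ * ‖u x‖ ^ 2 ≤ 4 * ∫ x in Ioi (0 : ℝ), ‖deriv u x‖ ^ 2 := by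
  have hinv : ContinuousOn (fun x : ℝ => x⁻¹) (Ioi 0) :=
    continuousOn_inv₀.mono fun x hx => ne_of_gt hx
  have hinv2 : ContinuousOn (fun x : ℝ => (x ^ 2)⁻¹) (Ioi 0) :=
    ContinuousOn.inv₀ (by fun_prop) fun x hx => pow_ne_zero 2 (ne_of_gt hx)
  set g : ℝ → ℝ := fun x =>
    -(x ^ 2)⁻¹ * ‖u x‖ ^ 2 + x⁻¹ * (2 * inner ℝ (u x) (deriv u x)) with hg
  have hder : ∀ x ∈ Ioi (0 : ℝ), HasDerivAt (fun x => x⁻¹ * ‖u x‖ ^ 2) (g x) x := fun x hx =>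
    (hasDerivAt_inv (ne_of_gt hx)).mul (hu.hasDerivAt_normSq x)
  have hI2 : IntegrableOn (fun x => (x ^ 2)⁻¹ * ‖u x‖ ^ 2) (Ioi 0) :=
    (hu.integrable_weight hinv2).integrableOn
  have hI1 : IntegrableOn (fun x => ‖deriv u x‖ ^ 2) (Ioi 0) := hu.integrable_deriv.integrableOn
  have hpt : ∀ x ∈ Ioi (0 : ℝ),
      ‖deriv u x - ((2 * x)⁻¹ : ℝ) • u x‖ ^ 2 =
        ‖deriv u x‖ ^ 2 - 4⁻¹ * ((x ^ 2)⁻¹ * ‖u x‖ ^ 2) - 2⁻¹ * g x := by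
    intro x hx
    have hx0 : x ≠ 0 := ne_of_gt hx
    rw [norm_sub_sq_real, inner_smul_right, norm_smul, real_inner_comm, mul_pow, Real.norm_eq_abs,
      sq_abs, hg]
    field_simp
    ring
  have hgI : IntegrableOn g (Ioi 0) := by
    -- Cauchy–Schwarz dominates the cross term by the two quadratic ones.
    have hmeas : AEStronglyMeasurable g (volume.restrict (Ioi 0)) := by
      refine ContinuousOn.aestronglyMeasurable ?_ measurableSet_Ioi
      exact (hinv2.neg.mul (hu.smooth.continuous.norm.pow 2).continuousOn).add
        (hinv.mul (continuous_const.mul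
          (hu.smooth.continuous.inner hu.continuous_deriv)).continuousOn)
    refine Integrable.mono' ((hI2.const_mul 2).add hI1) hmeas
      ((ae_restrict_iff' measurableSet_Ioi).2 (Eventually.of_forall fun x hx => ?_))
    have hx' : (0 : ℝ) < x := hx
    have hcs := abs_real_inner_le_norm (u x) (deriv u x)
    have h1 : |x⁻¹ * (2 * inner ℝ (u x) (deriv u x))| ≤
        2 * (x⁻¹ * ‖u x‖) * ‖deriv u x‖ := by
      rw [abs_mul, abs_mul, abs_two, abs_of_pos (inv_pos.2 hx')]
      have := mul_le_mul_of_nonneg_left hcs (inv_pos.2 hx').le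
      linarith
    have h2 : |-(x ^ 2)⁻¹ * ‖u x‖ ^ 2| = (x⁻¹ * ‖u x‖) ^ 2 := by
      rw [neg_mul, abs_neg, abs_of_nonneg (by positivity), mul_pow, inv_pow]
    have h3 : (x ^ 2)⁻¹ * ‖u x‖ ^ 2 = (x⁻¹ * ‖u x‖) ^ 2 := by rw [mul_pow, inv_pow]
    simp only [hg, Real.norm_eq_abs, Pi.add_apply, h3]
    refine (abs_add_le _ _).trans ?_
    rw [h2]
    nlinarith [sq_nonneg (x⁻¹ * ‖u x‖ - ‖deriv u x‖)]
  have hg0 : ∫ x in Ioi (0 : ℝ), g x = 0 := by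
    rw [integral_Ioi_of_hasDerivAt_of_tendsto (hu.continuous_weight hinv).continuousWithinAt
      hder hgI (hu.tendsto_weight _)]
    simp
  have hnn : 0 ≤ ∫ x in Ioi (0 : ℝ), ‖deriv u x - ((2 * x)⁻¹ : ℝ) • u x‖ ^ 2 :=
    integral_nonneg fun x => by positivity
  have hsub : IntegrableOn (fun x => ‖deriv u x‖ ^ 2 - 4⁻¹ * ((x ^ 2)⁻¹ * ‖u x‖ ^ 2)) (Ioi 0) :=
    hI1.sub (hI2.const_mul _)
  rw [setIntegral_congr_fun measurableSet_Ioi hpt, integral_sub hsub (hgI.const_mul _),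
    integral_sub hI1 (hI2.const_mul _), integral_const_mul, integral_const_mul, hg0] at hnn
  linarith

/-- Agmon's inequality: `‖u x‖² = -∫ₓ^∞ (‖u‖²)'`, then Young's inequality for the integrand. -/
lemma agmon (hu : IsTest u) {ε : ℝ} (hε : 0 < ε) {x : ℝ} (hx : 0 < x) :
    ‖u x‖ ^ 2 ≤ ε * (∫ x in Ioi (0 : ℝ), ‖deriv u x‖ ^ 2) +
      ε⁻¹ * ∫ x in Ioi (0 : ℝ), ‖u x‖ ^ 2 := by
  have hI : Integrable (fun y => ε * ‖deriv u y‖ ^ 2 + ε⁻¹ * ‖u y‖ ^ 2) :=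
    (hu.integrable_deriv.const_mul _).add (hu.integrable_normSq.const_mul _)
  have hftc := integral_Ioi_of_hasDerivAt_of_tendsto' (a := x)
    (fun y _ => hu.hasDerivAt_normSq y) hu.integrable_inner.integrableOn
    (by simpa using hu.tendsto_weight fun _ => 1)
  calc ‖u x‖ ^ 2 = ∫ y in Ioi x, -(2 * inner ℝ (u y) (deriv u y)) := by
        rw [integral_neg, hftc]; ring
    _ ≤ ∫ y in Ioi x, (ε * ‖deriv u y‖ ^ 2 + ε⁻¹ * ‖u y‖ ^ 2) := by
        refine integral_mono hu.integrable_inner.neg.integrableOn hI.integrableOn fun y => ?_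
        have hcs := (abs_le.1 (abs_real_inner_le_norm (u y) (deriv u y))).1
        have hsq := mul_nonneg hε.le (sq_nonneg (‖deriv u y‖ - ε⁻¹ * ‖u y‖))
        have hexp : ε * (‖deriv u y‖ - ε⁻¹ * ‖u y‖) ^ 2 =
            ε * ‖deriv u y‖ ^ 2 + ε⁻¹ * ‖u y‖ ^ 2 - 2 * (‖u y‖ * ‖deriv u y‖) := by
          field_simp
          ring
        dsimp only
        linarith
    _ ≤ ∫ y in Ioi (0 : ℝ), (ε * ‖deriv u y‖ ^ 2 + ε⁻¹ * ‖u y‖ ^ 2) :=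
        setIntegral_mono_set hI.integrableOn (Eventually.of_forall fun y => by
          simp only [Pi.zero_apply]; positivity)
          (Ioi_subset_Ioi hx.le).eventuallyLE
    _ = _ := by
        rw [integral_add (hu.integrable_deriv.const_mul _).integrableOn
          (hu.integrable_normSq.const_mul _).integrableOn, integral_const_mul, integral_const_mul]

end IsTest

lemma potential_lower_bound (V : ℝ → ℝ) (hV : ContinuousOn V (Ioi 0))
    (C : ℝ) (hC : C > -(1/4)) (ρ : ℝ → ℝ)
    (hVρ : ∀ x ∈ Ioo (0:ℝ) 2, V x = C / x ^ 2 + ρ x)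
    (hρ : Tendsto (fun x => x ^ 2 * ρ x) (nhdsWithin 0 (Ioi 0)) (nhds 0))
    (L : ℝ) (hL : 0 ≤ L) (W : ℝ → ℝ) (hVW : ∀ x > (1:ℝ), V x = L / x ^ 2 + W x) :
    ∃ c B : ℝ, 0 ≤ c ∧ c < 1 / 4 ∧ 0 ≤ B ∧ ∀ x > (0 : ℝ),
      -(c * (x ^ 2)⁻¹) - B - (Ioi 1).indicator (fun x => |W x|) x ≤ V x := by
  obtain ⟨c, hc0, hc1, hcC⟩ : ∃ c : ℝ, 0 ≤ c ∧ c < 1 / 4 ∧ 0 < C + c :=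
    ⟨max 0 (1 / 8 - C / 2), le_max_left _ _, max_lt (by norm_num) (by linarith), by
      have := le_max_right 0 (1 / 8 - C / 2); linarith⟩
  have hev : ∀ᶠ x in nhdsWithin (0 : ℝ) (Ioi 0), -(C + c) < x ^ 2 * ρ x :=
    hρ.eventually (lt_mem_nhds (by linarith))
  obtain ⟨δ, hδ, hδρ⟩ := mem_nhdsGT_iff_exists_Ioo_subset.1 hev
  have hδ0 : (0 : ℝ) < δ := hδ
  obtain ⟨B, hB⟩ := isCompact_Icc.exists_bound_of_continuousOn
    (hV.mono fun x (hx : x ∈ Icc δ 1) => hδ0.trans_le hx.1)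
  refine ⟨c, max B 0, hc0, hc1, le_max_right _ _, fun x hx => ?_⟩
  have hB0 : 0 ≤ max B 0 := le_max_right _ _
  have hcx : 0 ≤ c * (x ^ 2)⁻¹ := by positivity
  by_cases hx1 : 1 < x
  · rw [indicator_of_mem (show x ∈ Ioi (1 : ℝ) from hx1), hVW x hx1]
    have : 0 ≤ L / x ^ 2 := by positivity
    linarith [neg_abs_le (W x)]
  · rw [indicator_of_notMem (show x ∉ Ioi (1 : ℝ) from hx1)]
    push Not at hx1
    by_cases hxδ : x < δ
    · have h1 : -(C + c) < x ^ 2 * ρ x := hδρ ⟨hx, hxδ⟩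
      rw [hVρ x ⟨hx, by linarith⟩]
      have h2 := mul_lt_mul_of_pos_right h1 (show 0 < (x ^ 2)⁻¹ by positivity)
      have h3 : x ^ 2 * ρ x * (x ^ 2)⁻¹ = ρ x := by field_simp
      rw [h3] at h2
      rw [div_eq_mul_inv]
      linarith
    · have := (abs_le.1 (hB x ⟨not_lt.1 hxδ, hx1⟩)).1
      linarith [le_max_left B 0]

/-- Global semicoercive estimate for the T-energy form. If `V` is
continuous on `(0,∞)` with a Hardy-subcritical inverse-square core `C/x² + ρ(x)`
(`C > −1/4`, `x²ρ(x) → 0` as `x → 0⁺`) on `(0,2)` and a centrifugal-plus-`L¹`-tail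
decomposition `L/x² + W(x)` (`L ≥ 0`, `W ∈ L¹((1,∞))`) on `(1,∞)`, then there are
`a > 0` and `b ≥ 0` with
`∫₀^∞ (|u′|² + V|u|²) ≥ a ∫₀^∞ |u′|² − b ∫₀^∞ |u|²` for all smooth compactly
supported `u : (0,∞) → ℂ`. -/
theorem stmt_8 (V : ℝ → ℝ) (hV : ContinuousOn V (Set.Ioi 0))
    (C : ℝ) (hC : C > -(1/4)) (ρ : ℝ → ℝ)
    (hVρ : ∀ x ∈ Set.Ioo (0:ℝ) 2, V x = C / x ^ 2 + ρ x)
    (hρ : Tendsto (fun x => x ^ 2 * ρ x) (nhdsWithin 0 (Set.Ioi 0)) (nhds 0))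
    (L : ℝ) (hL : 0 ≤ L) (W : ℝ → ℝ) (hW : IntegrableOn W (Set.Ioi 1))
    (hVW : ∀ x > (1:ℝ), V x = L / x ^ 2 + W x) :
    ∃ a > (0:ℝ), ∃ b ≥ (0:ℝ), ∀ u : ℝ → ℂ,
      ContDiff ℝ (⊤ : ℕ∞) u → HasCompactSupport u → tsupport u ⊆ Set.Ioi 0 →
      a * (∫ x in Set.Ioi (0:ℝ), ‖deriv u x‖ ^ 2) -
          b * (∫ x in Set.Ioi (0:ℝ), ‖u x‖ ^ 2) ≤
        ∫ x in Set.Ioi (0:ℝ), (‖deriv u x‖ ^ 2 + V x * ‖u x‖ ^ 2) := by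
  obtain ⟨c, B, hc0, hc1, hB, hbound⟩ :=
    potential_lower_bound V hV C hC ρ hVρ hρ L hL W hVW
  set w : ℝ → ℝ := (Ioi 1).indicator fun x => |W x| with hw
  have hw0 : ∀ x, 0 ≤ w x := indicator_nonneg fun x _ => abs_nonneg _
  have hwI : IntegrableOn w (Ioi 0) :=
    (IntegrableOn.integrable_indicator hW.abs measurableSet_Ioi).integrableOn
  set M : ℝ := ∫ x in Ioi (0 : ℝ), w x with hM
  have hM0 : 0 ≤ M := integral_nonneg hw0
  -- Hardy leaves the fraction `1 - 4c`; this `ε` spends at most half of it on `w`.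
  obtain ⟨ε, hε, hMε⟩ : ∃ ε > 0, M * ε ≤ (1 - 4 * c) / 2 := by
    have hpos : 0 < 1 - 4 * c := by linarith
    refine ⟨(1 - 4 * c) / (2 * (M + 1)), by positivity, ?_⟩
    rw [← mul_div_assoc, div_le_div_iff₀ (by positivity) (by positivity)]
    nlinarith
  refine ⟨(1 - 4 * c) / 2, by linarith, B + M * ε⁻¹, by positivity, fun u h1 h2 h3 => ?_⟩
  have hu : IsTest u := ⟨h1, h2, h3⟩
  set D := ∫ x in Ioi (0 : ℝ), ‖deriv u x‖ ^ 2 with hD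
  set N := ∫ x in Ioi (0 : ℝ), ‖u x‖ ^ 2 with hN
  have hD0 : 0 ≤ D := integral_nonneg fun x => by positivity
  have hinv2 : ContinuousOn (fun x : ℝ => (x ^ 2)⁻¹) (Ioi 0) :=
    ContinuousOn.inv₀ (by fun_prop) fun x hx => pow_ne_zero 2 (ne_of_gt hx)
  have iD : IntegrableOn (fun x => ‖deriv u x‖ ^ 2) (Ioi 0) := hu.integrable_deriv.integrableOn
  have iN : IntegrableOn (fun x => ‖u x‖ ^ 2) (Ioi 0) := hu.integrable_normSq.integrableOn
  have iH : IntegrableOn (fun x => (x ^ 2)⁻¹ * ‖u x‖ ^ 2) (Ioi 0) :=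
    (hu.integrable_weight hinv2).integrableOn
  have iV : IntegrableOn (fun x => V x * ‖u x‖ ^ 2) (Ioi 0) :=
    (hu.integrable_weight hV).integrableOn
  have hag : ∀ x ∈ Ioi (0 : ℝ), w x * ‖u x‖ ^ 2 ≤ w x * (ε * D + ε⁻¹ * N) := fun x hx =>
    mul_le_mul_of_nonneg_left (hu.agmon hε hx) (hw0 x)
  have iW : IntegrableOn (fun x => w x * ‖u x‖ ^ 2) (Ioi 0) := by
    refine Integrable.mono' (hwI.mul_const (ε * D + ε⁻¹ * N))
      (hwI.aestronglyMeasurable.mul iN.aestronglyMeasurable)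
      ((ae_restrict_iff' measurableSet_Ioi).2 (Eventually.of_forall fun x hx => ?_))
    rw [Real.norm_of_nonneg (mul_nonneg (hw0 x) (by positivity))]
    exact hag x hx
  have hWle : ∫ x in Ioi (0 : ℝ), w x * ‖u x‖ ^ 2 ≤ M * (ε * D + ε⁻¹ * N) := by
    rw [hM, ← integral_mul_const]
    exact setIntegral_mono_on iW (hwI.mul_const _) measurableSet_Ioi hag
  have iH' : IntegrableOn (fun x => -(c * ((x ^ 2)⁻¹ * ‖u x‖ ^ 2))) (Ioi 0) :=
    (iH.const_mul c).neg
  have iHN : IntegrableOn (fun x => -(c * ((x ^ 2)⁻¹ * ‖u x‖ ^ 2)) - B * ‖u x‖ ^ 2) (Ioi 0) :=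
    iH'.sub (iN.const_mul B)
  have hVge : -(c * ∫ x in Ioi (0 : ℝ), (x ^ 2)⁻¹ * ‖u x‖ ^ 2) - B * N -
      ∫ x in Ioi (0 : ℝ), w x * ‖u x‖ ^ 2 ≤ ∫ x in Ioi (0 : ℝ), V x * ‖u x‖ ^ 2 := by
    rw [hN, ← integral_const_mul, ← integral_const_mul, ← integral_neg,
      ← integral_sub iH' (iN.const_mul B), ← integral_sub iHN iW]
    refine setIntegral_mono_on (iHN.sub iW) iV measurableSet_Ioi fun x hx => ?_
    have := mul_le_mul_of_nonneg_right (hbound x hx) (sq_nonneg ‖u x‖)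
    linarith
  rw [integral_add iD iV]
  have hH := mul_le_mul_of_nonneg_left hu.hardy hc0
  have hMD := mul_le_mul_of_nonneg_right hMε hD0
  linarith
end

section
/- Let ν ∈ (0, 1), x₀ > 0, and let R : (0, x₀] → ℝ be continuous and bounded. Then there exist x₁ ∈ (0, x₀] and a twice continuously differentiable function u : (0, x₁] → ℝ such that u″(x) = ((ν² − 1/4)/x² + R(x))·u(x) for all x ∈ (0, x₁], u(x) > 0 for all x ∈ (0, x₁], and lim_{x → 0⁺} u(x)/x^{1/2 + ν} = 1. -/
/-!
Writing `u = x ^ b * w` with `b = 1/2 + ν` turns `u'' = (b (b - 1) / x² + R) u` into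
`(x ^ (2b) w')' = x ^ (2b) R w`, because `b (b - 1) = ν² - 1/4`. The regular branch is normalised by
`w 0 = 1`, `w' = o(x ^ (-2b))`, which gives the Volterra equation
`w x = 1 + ∫₀ˣ t ^ (-2b) ∫₀ᵗ s ^ (2b) R s w s ds dt`.
The inner average `t ^ (-2b) ∫₀ᵗ s ^ (2b) R s w s ds` is at most `K ‖w‖ t` when `|R| ≤ K`
(`abs_avg_le`), so the right-hand side is a contraction on bounded continuous functions as soon as
`K δ² ≤ 1/4` on `[0, δ]`, and its fixed point satisfies `|w - 1| ≤ 1/3` (`exists_volterra`). Hence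
`w` is positive and tends to `1` at `0`, and two differentiations recover the equation for `u`.
-/

open Filter MeasureTheory Set BoundedContinuousFunction

/-- The weighted average `t ^ (-a) ∫₀ᵗ s ^ a r(s) w(s) ds`, the derivative of the Volterra
iterate of `w`. -/
noncomputable def avg (a : ℝ) (r w : ℝ → ℝ) (t : ℝ) : ℝ :=
  t ^ (-a) * ∫ s in (0:ℝ)..t, s ^ a * r s * w s

lemma integrand_intervalIntegrable {a K : ℝ} (ha : 0 ≤ a) {r w : ℝ → ℝ} (hr : Measurable r)
    (hK : ∀ x, |r x| ≤ K) (hw : Continuous w) (p q : ℝ) :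
    IntervalIntegrable (fun s => s ^ a * r s * w s) volume p q := by
  have h1 : IntervalIntegrable (fun s : ℝ => s ^ a * w s) volume p q :=
    ((Real.continuous_rpow_const ha).mul hw).intervalIntegrable p q
  have h2 : IntervalIntegrable (fun s : ℝ => r s * (s ^ a * w s)) volume p q := by
    rw [intervalIntegrable_iff] at h1 ⊢
    exact h1.bdd_mul (c := K) hr.aestronglyMeasurable (Eventually.of_forall hK)
  exact h2.congr (fun s _ => by ring)

lemma abs_avg_le {a K M : ℝ} (ha : 0 ≤ a) {r w : ℝ → ℝ}
    (hK : ∀ x, |r x| ≤ K) (hM : ∀ x, |w x| ≤ M) {t : ℝ} (ht : 0 ≤ t) :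
    |avg a r w t| ≤ K * M * t := by
  have hK0 : 0 ≤ K := (abs_nonneg _).trans (hK 0)
  rcases ht.eq_or_lt with rfl | ht
  · simp [avg]
  have h : ‖∫ s in (0:ℝ)..t, s ^ a * r s * w s‖ ≤ t ^ a * K * M * |t - 0| := by
    apply intervalIntegral.norm_integral_le_of_norm_le_const
    intro s hs
    rw [uIoc_of_le ht.le] at hs
    rw [Real.norm_eq_abs, abs_mul, abs_mul, abs_of_nonneg (Real.rpow_nonneg hs.1.le a)]
    have := Real.rpow_le_rpow hs.1.le hs.2 ha
    have := Real.rpow_nonneg ht.le a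
    gcongr
    · exact hK s
    · exact hM s
  rw [sub_zero, abs_of_pos ht, Real.norm_eq_abs] at h
  have hp := Real.rpow_pos_of_pos ht (-a)
  have he : t ^ (-a) * t ^ a = 1 := by
    rw [← Real.rpow_add ht]; simp
  rw [avg, abs_mul, abs_of_pos hp]
  calc t ^ (-a) * |∫ s in (0:ℝ)..t, s ^ a * r s * w s|
      ≤ t ^ (-a) * (t ^ a * K * M * t) := by gcongr
    _ = (t ^ (-a) * t ^ a) * (K * M * t) := by ring
    _ = K * M * t := by rw [he, one_mul]

lemma measurable_avg {a K : ℝ} (ha : 0 ≤ a) {r w : ℝ → ℝ} (hr : Measurable r)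
    (hK : ∀ x, |r x| ≤ K) (hw : Continuous w) : Measurable (avg a r w) := by
  have h : Continuous fun t => ∫ s in (0:ℝ)..t, s ^ a * r s * w s :=
    intervalIntegral.continuous_primitive
      (fun p q => integrand_intervalIntegrable ha hr hK hw p q) 0
  exact (measurable_id.pow_const (-a)).mul h.measurable

lemma avg_intervalIntegrable {a K M : ℝ} (ha : 0 ≤ a) {r w : ℝ → ℝ} (hr : Measurable r)
    (hK : ∀ x, |r x| ≤ K) (hw : Continuous w) (hM : ∀ x, |w x| ≤ M) {x : ℝ} (hx : 0 ≤ x) :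
    IntervalIntegrable (avg a r w) volume 0 x := by
  have hg : IntervalIntegrable (fun t => K * M * t) volume 0 x :=
    (by fun_prop : Continuous fun t : ℝ => K * M * t).intervalIntegrable _ _
  refine hg.mono_fun' (measurable_avg ha hr hK hw).aestronglyMeasurable ?_
  rw [uIoc_of_le hx]
  exact (ae_restrict_iff' measurableSet_Ioc).2
    (Eventually.of_forall fun t ht => abs_avg_le ha hK hM ht.1.le)

lemma abs_integral_avg_le {a K M δ : ℝ} (ha : 0 ≤ a) {r w : ℝ → ℝ}
    (hK : ∀ x, |r x| ≤ K) (hM : ∀ x, |w x| ≤ M) {x : ℝ} (hx : x ∈ Icc 0 δ) :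
    |∫ t in (0:ℝ)..x, avg a r w t| ≤ K * δ ^ 2 * M := by
  have hK0 : 0 ≤ K := (abs_nonneg _).trans (hK 0)
  have hM0 : 0 ≤ M := (abs_nonneg _).trans (hM 0)
  have hδ : 0 ≤ δ := hx.1.trans hx.2
  have h : ‖∫ t in (0:ℝ)..x, avg a r w t‖ ≤ K * M * δ * |x - 0| := by
    apply intervalIntegral.norm_integral_le_of_norm_le_const
    intro t ht
    rw [uIoc_of_le hx.1] at ht
    refine (abs_avg_le ha hK hM ht.1.le).trans ?_
    have := ht.2.trans hx.2
    gcongr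
  rw [sub_zero, abs_of_nonneg hx.1, Real.norm_eq_abs] at h
  refine h.trans ?_
  calc K * M * δ * x ≤ K * M * δ * δ := by have := hx.2; gcongr
    _ = _ := by ring

lemma avg_sub {a K : ℝ} (ha : 0 ≤ a) {r w v : ℝ → ℝ} (hr : Measurable r)
    (hK : ∀ x, |r x| ≤ K) (hw : Continuous w) (hv : Continuous v) (t : ℝ) :
    avg a r w t - avg a r v t = avg a r (fun s => w s - v s) t := by
  rw [avg, avg, avg, ← mul_sub, ← intervalIntegral.integral_sub
    (integrand_intervalIntegrable ha hr hK hw _ _) (integrand_intervalIntegrable ha hr hK hv _ _)]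
  simp only [mul_sub]

/-- The solution of the Volterra equation on `[0, δ]`, as the fixed point of a contraction of
`ℝ →ᵇ ℝ`; precomposing with the projection onto `[0, δ]` makes the iterates bounded on all
of `ℝ`. -/
lemma exists_volterra {a K δ : ℝ} (ha : 0 ≤ a) (hδ : 0 < δ) (hKδ : K * δ ^ 2 ≤ 1 / 4)
    {r : ℝ → ℝ} (hr : Measurable r) (hK : ∀ x, |r x| ≤ K) :
    ∃ w : ℝ → ℝ, Continuous w ∧ (∀ x, |w x - 1| ≤ 1 / 3) ∧
      ∃ M, (∀ x, |w x| ≤ M) ∧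
      ∀ x ∈ Icc 0 δ, w x = 1 + ∫ t in (0:ℝ)..x, avg a r w t := by
  let c : ℝ → ℝ := fun x => projIcc 0 δ hδ.le x
  have hc : Continuous c := continuous_subtype_val.comp continuous_projIcc
  have hcm : ∀ x, c x ∈ Icc 0 δ := fun x => (projIcc 0 δ hδ.le x).2
  have hb : ∀ (w : ℝ →ᵇ ℝ) x, |w x| ≤ ‖w‖ := fun w x => w.norm_coe_le_norm x
  have hcont : ∀ w : ℝ →ᵇ ℝ, Continuous fun x => 1 + ∫ t in (0:ℝ)..c x, avg a r w t := by
    intro w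
    have h1 : ContinuousOn (fun x => ∫ t in (0:ℝ)..x, avg a r w t) (Icc 0 δ) := by
      have := intervalIntegral.continuousOn_primitive_interval
        (μ := volume) (f := avg a r w) (a := 0) (b := δ)
      rw [uIcc_of_le hδ.le] at this
      apply this
      have h2 := avg_intervalIntegrable ha hr hK w.continuous (hb w) hδ.le
      rwa [intervalIntegrable_iff_integrableOn_Icc_of_le hδ.le] at h2
    exact continuous_const.add (h1.comp_continuous hc hcm)
  let T : (ℝ →ᵇ ℝ) → (ℝ →ᵇ ℝ) := fun w =>
    BoundedContinuousFunction.ofNormedAddCommGroup _ (hcont w) (1 + 1 / 4 * ‖w‖) (by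
      intro x
      have h := abs_integral_avg_le ha hK (hb w) (hcm x)
      have h2 : K * δ ^ 2 * ‖w‖ ≤ 1 / 4 * ‖w‖ := by gcongr
      rw [Real.norm_eq_abs]
      refine (abs_add_le _ _).trans ?_
      rw [abs_one]
      linarith)
  have hT : ∀ w x, T w x = 1 + ∫ t in (0:ℝ)..c x, avg a r w t := fun w x => rfl
  have hlip : ContractingWith (1 / 4) T := by
    refine ⟨by rw [← NNReal.coe_lt_coe]; norm_num, LipschitzWith.of_dist_le_mul fun w v => ?_⟩
    rw [BoundedContinuousFunction.dist_le (by positivity)]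
    intro x
    have hd : ∀ s, |w s - v s| ≤ dist w v := fun s =>
      (Real.dist_eq (w s) (v s)).symm.trans_le (BoundedContinuousFunction.dist_coe_le_dist s)
    rw [Real.dist_eq, hT, hT, add_sub_add_left_eq_sub, ← intervalIntegral.integral_sub
      (avg_intervalIntegrable ha hr hK w.continuous (hb w) (hcm x).1)
      (avg_intervalIntegrable ha hr hK v.continuous (hb v) (hcm x).1)]
    simp only [avg_sub ha hr hK w.continuous v.continuous]
    refine (abs_integral_avg_le ha hK hd (hcm x)).trans ?_
    push_cast
    gcongr
  obtain ⟨w, hw⟩ : ∃ w, T w = w := ⟨_, hlip.fixedPoint_isFixedPt⟩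
  have heq : ∀ x, w x = 1 + ∫ t in (0:ℝ)..c x, avg a r w t := fun x => by
    rw [← hT, hw]
  have hest : ∀ x, |w x - 1| ≤ 1 / 4 * ‖w‖ := by
    intro x
    rw [heq x, add_sub_cancel_left]
    refine (abs_integral_avg_le ha hK (hb w) (hcm x)).trans ?_
    gcongr
  have hnorm : ‖w‖ ≤ 4 / 3 := by
    have : ‖w‖ ≤ 1 + 1 / 4 * ‖w‖ := by
      rw [BoundedContinuousFunction.norm_le (by positivity)]
      intro x
      have h1 := hest x
      rw [Real.norm_eq_abs]
      rw [abs_le] at h1 ⊢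
      constructor <;> linarith [norm_nonneg w]
    linarith
  refine ⟨w, w.continuous, fun x => (hest x).trans (by linarith), ‖w‖, hb w, fun x hx => ?_⟩
  rw [heq x]
  simp only [c, projIcc_of_mem hδ.le hx]

/-- Existence of the Friedrichs (regular) Frobenius branch at the apex.
For `ν ∈ (0,1)`, `x₀ > 0` and `R` continuous and bounded on `(0, x₀]`, there exist
`x₁ ∈ (0, x₀]` and a twice continuously differentiable `u` on `(0, x₁]` with
`u″ = ((ν² − 1/4)/x² + R(x))·u`, `u > 0` on `(0, x₁]`, and
`u(x)/x^{1/2+ν} → 1` as `x → 0⁺`. -/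
theorem stmt_12 (ν x₀ : ℝ) (hν : ν ∈ Set.Ioo (0:ℝ) 1) (hx₀ : 0 < x₀)
    (R : ℝ → ℝ) (hR : ContinuousOn R (Set.Ioc 0 x₀))
    (hRb : ∃ K : ℝ, ∀ x ∈ Set.Ioc (0:ℝ) x₀, |R x| ≤ K) :
    ∃ x₁ ∈ Set.Ioc (0:ℝ) x₀, ∃ u u' u'' : ℝ → ℝ,
      (∀ x ∈ Set.Ioc (0:ℝ) x₁, HasDerivAt u (u' x) x) ∧
      (∀ x ∈ Set.Ioc (0:ℝ) x₁, HasDerivAt u' (u'' x) x) ∧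
      ContinuousOn u'' (Set.Ioc 0 x₁) ∧
      (∀ x ∈ Set.Ioc (0:ℝ) x₁, u'' x = ((ν ^ 2 - 1/4) / x ^ 2 + R x) * u x) ∧
      (∀ x ∈ Set.Ioc (0:ℝ) x₁, 0 < u x) ∧
      Tendsto (fun x => u x / x ^ ((1:ℝ)/2 + ν))
        (nhdsWithin 0 (Set.Ioi 0)) (nhds 1) := by
  obtain ⟨K₀, hK₀⟩ := hRb
  obtain ⟨hν0, hν1⟩ := hν
  set b : ℝ := 1 / 2 + ν with hb
  have ha : 0 ≤ 2 * b := by linarith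
  set K := max K₀ 1
  have hK1 : 1 ≤ K := le_max_right _ _
  set r : ℝ → ℝ := (Ioc 0 x₀).indicator R with hrdef
  have hr : Measurable r := by
    classical
    rw [hrdef, ← Set.piecewise_eq_indicator]
    exact hR.measurable_piecewise continuousOn_const measurableSet_Ioc
  have hrK : ∀ x, |r x| ≤ K := by
    intro x
    by_cases hx : x ∈ Ioc 0 x₀
    · rw [hrdef, indicator_of_mem hx]
      exact (hK₀ x hx).trans (le_max_left _ _)
    · rw [hrdef, indicator_of_notMem hx, abs_zero]
      linarith
  set δ := min x₀ (1 / (4 * K)) with hδdef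
  have hδ : 0 < δ := lt_min hx₀ (by positivity)
  have hδx : δ ≤ x₀ := min_le_left _ _
  have hδK : K * δ ≤ 1 / 4 := by
    calc K * δ ≤ K * (1 / (4 * K)) := by gcongr; exact min_le_right _ _
      _ = 1 / 4 := by field_simp
  have hKδ : K * δ ^ 2 ≤ 1 / 4 := by nlinarith
  obtain ⟨w, hwc, hw1, M, hM, hw⟩ := exists_volterra ha hδ hKδ hr hrK
  have hwpos : ∀ x, 0 < w x := fun x => by have := abs_le.1 (hw1 x); linarith
  -- Derivatives are two-sided, so the solution is used strictly inside `(0, δ)`.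
  have hRat : ∀ x ∈ Ioo 0 δ, ContinuousAt R x := fun x hx =>
    hR.continuousAt (Ioc_mem_nhds hx.1 (hx.2.trans_le hδx))
  have hrR : ∀ x ∈ Ioo 0 δ, r =ᶠ[nhds x] R := fun x hx => by
    filter_upwards [Ioc_mem_nhds hx.1 (hx.2.trans_le hδx)] with y hy
    exact indicator_of_mem hy R
  have hF : ∀ x ∈ Ioo 0 δ, HasDerivAt (fun t => ∫ s in (0:ℝ)..t, s ^ (2 * b) * r s * w s)
      (x ^ (2 * b) * R x * w x) x := by
    intro x hx
    rw [← (hrR x hx).self_of_nhds]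
    have hrc : ContinuousAt r x := (hRat x hx).congr (hrR x hx).symm
    refine intervalIntegral.integral_hasDerivAt_right
      (integrand_intervalIntegrable ha hr hrK hwc _ _) ?_ ?_
    · exact (((Real.continuous_rpow_const ha).measurable.mul hr).mul
        hwc.measurable).stronglyMeasurable.stronglyMeasurableAtFilter
    · exact ((Real.continuous_rpow_const ha).continuousAt.mul hrc).mul hwc.continuousAt
  have hG : ∀ x ∈ Ioo 0 δ, HasDerivAt (avg (2 * b) r w)
      (-(2 * b) / x * avg (2 * b) r w x + R x * w x) x := by
    intro x hx
    have h := (Real.hasDerivAt_rpow_const (p := -(2 * b)) (Or.inl hx.1.ne')).mul (hF x hx)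
    refine h.congr_deriv ?_
    have he : x ^ (-(2 * b)) * x ^ (2 * b) = 1 := by
      rw [← Real.rpow_add hx.1]; simp
    rw [avg, Real.rpow_sub_one hx.1.ne']
    linear_combination (R x * w x) * he
  have hwd : ∀ x ∈ Ioo 0 δ, HasDerivAt w (avg (2 * b) r w x) x := by
    intro x hx
    have h := intervalIntegral.integral_hasDerivAt_right
      (avg_intervalIntegrable ha hr hrK hwc hM hx.1.le)
      (measurable_avg ha hr hrK hwc).stronglyMeasurable.stronglyMeasurableAtFilter
      (hG x hx).continuousAt
    refine (h.const_add 1).congr_of_eventuallyEq ?_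
    filter_upwards [Icc_mem_nhds hx.1 hx.2] with y hy
    exact hw y hy
  have hsub : ∀ x ∈ Ioc 0 (δ / 2), x ∈ Ioo 0 δ := fun x hx => ⟨hx.1, by linarith [hx.2]⟩
  refine ⟨δ / 2, ⟨by linarith, by linarith⟩, fun x => x ^ b * w x,
    fun x => b * x ^ (b - 1) * w x + x ^ b * avg (2 * b) r w x,
    fun x => ((ν ^ 2 - 1/4) / x ^ 2 + R x) * (x ^ b * w x), ?_, ?_, ?_, ?_, ?_, ?_⟩
  · intro x hx
    exact (Real.hasDerivAt_rpow_const (Or.inl hx.1.ne')).mul (hwd x (hsub x hx))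
  · intro x hx
    have hx0 : x ≠ 0 := hx.1.ne'
    have h1 := (((Real.hasDerivAt_rpow_const (p := b - 1) (Or.inl hx0)).const_mul b).mul
      (hwd x (hsub x hx))).add
      ((Real.hasDerivAt_rpow_const (p := b) (Or.inl hx0)).mul (hG x (hsub x hx)))
    refine h1.congr_deriv ?_
    rw [Real.rpow_sub_one hx0 (b - 1), Real.rpow_sub_one hx0 b]
    have : ν = b - 1 / 2 := by linarith
    rw [this]
    field_simp
    ring
  · intro x hx
    have hx0 : x ≠ 0 := hx.1.ne'
    refine ContinuousAt.continuousWithinAt ?_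
    exact ((continuousAt_const.div (continuousAt_id.pow 2) (pow_ne_zero 2 hx0)).add
      (hRat x (hsub x hx))).mul
      ((Real.continuousAt_rpow_const x b (Or.inl hx0)).mul hwc.continuousAt)
  · intro x _
    rfl
  · intro x hx
    exact mul_pos (Real.rpow_pos_of_pos hx.1 b) (hwpos x)
  · have hw0 : w 0 = 1 := by simpa using hw 0 ⟨le_rfl, hδ.le⟩
    have ht : Tendsto w (nhdsWithin 0 (Ioi 0)) (nhds 1) := by
      rw [← hw0]
      exact hwc.continuousAt.tendsto.mono_left nhdsWithin_le_nhds
    refine ht.congr' ?_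
    filter_upwards [self_mem_nhdsWithin] with x hx
    have := (Real.rpow_pos_of_pos hx b).ne'
    field_simp
end

section
/- Let ω > 0 and a, b ∈ ℂ, and let u : [1, ∞) → ℂ be continuous with u(x) − (a·e^{iωx} + b·e^{−iωx}) → 0 as x → ∞. Then lim_{R → ∞} (1/R)·∫₁^R |u(x)|² dx = |a|² + |b|². In particular, if (a, b) ≠ (0, 0) then ∫₁^∞ |u(x)|² dx = ∞. -/
open MeasureTheory Filter

/-!
Put `v x = a e^{iωx} + b e^{-iωx}`. Then `‖v x‖² = ‖a‖² + ‖b‖² + 2 Re (a b̄ e^{2iωx})`, and the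
oscillating term has a bounded primitive because `ω ≠ 0`, so its average tends to `0`. Since `v`
is bounded and `u - v → 0`, also `‖u‖² - ‖v‖² → 0`, and the average of a function tending to `0`
tends to `0` (`tendsto_average_zero`). Adding the three contributions gives the limit of the means.
If `∫ ‖u‖²` were finite, the means would tend to `0`, forcing `‖a‖² + ‖b‖² = 0`.
-/

/-- The Cesàro principle for integral means. -/
lemma tendsto_average_zero (f : ℝ → ℝ) (hf : ContinuousOn f (Set.Ici 1))
    (h0 : Tendsto f atTop (nhds 0)) :
    Tendsto (fun R : ℝ => (1 / R) * ∫ x in (1:ℝ)..R, f x) atTop (nhds 0) := by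
  have hint : ∀ p q : ℝ, 1 ≤ p → 1 ≤ q → IntervalIntegrable f volume p q := fun p q hp hq =>
    (hf.mono fun x hx => le_trans (le_min hp hq) hx.1).intervalIntegrable
  rw [Metric.tendsto_atTop]
  intro ε hε
  obtain ⟨N₀, hN₀⟩ := (Metric.tendsto_atTop.1 h0) (ε / 2) (by positivity)
  set N := max N₀ 1 with hN
  have hN1 : 1 ≤ N := le_max_right _ _
  set K := |∫ x in (1:ℝ)..N, f x| with hK
  have hK0 : 0 ≤ K := abs_nonneg _
  -- beyond `2 * K / ε` the head contributes less than `ε / 2`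
  refine ⟨max N (2 * K / ε + 1), fun R hR => ?_⟩
  have hRN : N ≤ R := le_trans (le_max_left _ _) hR
  have hRK : 2 * K / ε + 1 ≤ R := le_trans (le_max_right _ _) hR
  have hR0 : 0 < R := by linarith
  have htail : |∫ x in N..R, f x| ≤ ε / 2 * |R - N| := by
    rw [← Real.norm_eq_abs]
    refine intervalIntegral.norm_integral_le_of_norm_le_const fun x hx => ?_
    rw [Set.uIoc_of_le hRN] at hx
    have := hN₀ x (le_trans (le_max_left _ _) hx.1.le)
    rw [dist_zero_right] at this
    exact this.le
  rw [abs_of_nonneg (by linarith : 0 ≤ R - N)] at htail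
  have hsplit := intervalIntegral.integral_add_adjacent_intervals
    (hint 1 N le_rfl hN1) (hint N R hN1 (hN1.trans hRN))
  have hKR : K < ε / 2 * R := by
    have : 2 * K / ε < R := by linarith
    rw [div_lt_iff₀ hε] at this
    linarith
  have htri := abs_add_le (∫ x in (1:ℝ)..N, f x) (∫ x in N..R, f x)
  rw [hsplit] at htri
  rw [dist_zero_right, Real.norm_eq_abs, abs_mul, abs_of_pos (by positivity : 0 < 1 / R),
    one_div, inv_mul_lt_iff₀ hR0]
  nlinarith

lemma norm_sq_add_exp (ω : ℝ) (a b : ℂ) (x : ℝ) :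
    ‖a * Complex.exp (Complex.I * (ω : ℂ) * (x : ℂ)) +
      b * Complex.exp (-(Complex.I * (ω : ℂ) * (x : ℂ)))‖ ^ 2 =
    ‖a‖ ^ 2 + ‖b‖ ^ 2 +
      2 * (a * (starRingEnd ℂ) b * Complex.exp (2 * Complex.I * (ω : ℂ) * (x : ℂ))).re := by
  have h1 : ∀ t : ℝ, ‖Complex.exp (Complex.I * t)‖ = 1 := fun t => by
    rw [mul_comm]; exact Complex.norm_exp_ofReal_mul_I t
  have e1 : ‖Complex.exp (Complex.I * (ω : ℂ) * (x : ℂ))‖ = 1 := by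
    have := h1 (ω * x)
    push_cast at this
    rwa [← mul_assoc] at this
  have e2 : ‖Complex.exp (-(Complex.I * (ω : ℂ) * (x : ℂ)))‖ = 1 := by
    rw [Complex.exp_neg, norm_inv, e1, inv_one]
  have e3 : (starRingEnd ℂ) (Complex.exp (-(Complex.I * (ω : ℂ) * (x : ℂ)))) =
      Complex.exp (Complex.I * (ω : ℂ) * (x : ℂ)) := by
    rw [← Complex.exp_conj]
    simp
  rw [← Complex.normSq_eq_norm_sq, Complex.normSq_add, Complex.normSq_eq_norm_sq,
    Complex.normSq_eq_norm_sq, norm_mul, norm_mul, e1, e2, mul_one, mul_one, map_mul, e3]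
  congr 3
  rw [show 2 * Complex.I * (ω : ℂ) * (x : ℂ) =
    Complex.I * (ω : ℂ) * (x : ℂ) + Complex.I * (ω : ℂ) * (x : ℂ) by ring, Complex.exp_add]
  ring_nf

lemma tendsto_average_osc (ω : ℝ) (hω : 0 < ω) (c : ℂ) :
    Tendsto (fun R : ℝ => (1 / R) * ∫ x in (1:ℝ)..R,
      2 * (c * Complex.exp (2 * Complex.I * (ω : ℂ) * (x : ℂ))).re) atTop (nhds 0) := by
  have hωC : (ω : ℂ) ≠ 0 := by exact_mod_cast hω.ne'
  have hk : 2 * Complex.I * (ω : ℂ) ≠ 0 := by simp [hω.ne']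
  set F : ℝ → ℂ := fun x =>
    c * Complex.exp (2 * Complex.I * (ω : ℂ) * (x : ℂ)) / (2 * Complex.I * (ω : ℂ)) with hF
  have hderiv : ∀ x : ℝ,
      HasDerivAt F (c * Complex.exp (2 * Complex.I * (ω : ℂ) * (x : ℂ))) x := fun x => by
    have h := (((Complex.ofRealCLM.hasDerivAt (x := x)).const_mul
      (2 * Complex.I * (ω : ℂ))).cexp.const_mul c).div_const (2 * Complex.I * (ω : ℂ))
    refine h.congr_deriv ?_
    simp only [Complex.ofRealCLM_apply, Complex.ofReal_one, mul_one]
    field_simp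
  have hderiv' : ∀ x : ℝ, HasDerivAt (fun x => 2 * (F x).re)
      (2 * (c * Complex.exp (2 * Complex.I * (ω : ℂ) * (x : ℂ))).re) x := fun x =>
    (Complex.reCLM.hasFDerivAt.comp_hasDerivAt x (hderiv x)).const_mul 2
  have hval : ∀ R : ℝ, ∫ x in (1:ℝ)..R,
      2 * (c * Complex.exp (2 * Complex.I * (ω : ℂ) * (x : ℂ))).re =
      2 * (F R).re - 2 * (F 1).re := fun R =>
    intervalIntegral.integral_eq_sub_of_hasDerivAt (fun x _ => hderiv' x)
      (Continuous.intervalIntegrable (by fun_prop) _ _)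
  have hbound : ∀ x : ℝ, |(F x).re| ≤ ‖c‖ / (2 * ω) := fun x => by
    refine (Complex.abs_re_le_norm _).trans (le_of_eq ?_)
    have : ‖Complex.exp (2 * Complex.I * (ω : ℂ) * (x : ℂ))‖ = 1 := by
      rw [show 2 * Complex.I * (ω : ℂ) * (x : ℂ) = ((2 * ω * x : ℝ) : ℂ) * Complex.I by
        push_cast; ring]
      exact Complex.norm_exp_ofReal_mul_I _
    simp [hF, this, abs_of_pos hω]
  simp_rw [hval]
  have hinv : Tendsto (fun R : ℝ => 1 / R) atTop (nhds 0) := by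
    simpa using tendsto_inv_atTop_zero (𝕜 := ℝ)
  refine Tendsto.zero_mul_isBoundedUnder_le hinv ?_
  refine isBoundedUnder_of ⟨4 * (‖c‖ / (2 * ω)), fun R => ?_⟩
  have h1 := abs_le.1 (hbound R)
  have h2 := abs_le.1 (hbound 1)
  simp only [Function.comp_apply, Real.norm_eq_abs]
  rw [abs_le]
  constructor <;> linarith [h1.1, h1.2, h2.1, h2.2]

/-- Averaging lemma for Jost-type asymptotics. If
`u(x) − (a e^{iωx} + b e^{−iωx}) → 0` as `x → ∞` with `ω > 0`, then
`(1/R)∫₁^R |u|² → |a|² + |b|²`; in particular, if `(a,b) ≠ (0,0)` then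
`∫₁^∞ |u|² = ∞`. -/
theorem stmt_15 (ω : ℝ) (hω : 0 < ω) (a b : ℂ) (u : ℝ → ℂ)
    (hu : ContinuousOn u (Set.Ici 1))
    (hasymp : Tendsto (fun x : ℝ =>
        u x - (a * Complex.exp (Complex.I * (ω : ℂ) * (x : ℂ)) +
               b * Complex.exp (-(Complex.I * (ω : ℂ) * (x : ℂ)))))
      atTop (nhds 0)) :
    Tendsto (fun R : ℝ => (1 / R) * ∫ x in (1:ℝ)..R, ‖u x‖ ^ 2)
        atTop (nhds (‖a‖ ^ 2 + ‖b‖ ^ 2)) ∧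
    (¬(a = 0 ∧ b = 0) →
      ∫⁻ x in Set.Ioi (1:ℝ), ENNReal.ofReal (‖u x‖ ^ 2) = ⊤) := by
  have hinv : Tendsto (fun R : ℝ => 1 / R) atTop (nhds 0) := by
    simpa using tendsto_inv_atTop_zero (𝕜 := ℝ)
  have hmain : Tendsto (fun R : ℝ => (1 / R) * ∫ x in (1:ℝ)..R, ‖u x‖ ^ 2)
      atTop (nhds (‖a‖ ^ 2 + ‖b‖ ^ 2)) := by
    set v : ℝ → ℂ := fun x => a * Complex.exp (Complex.I * (ω : ℂ) * (x : ℂ)) +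
      b * Complex.exp (-(Complex.I * (ω : ℂ) * (x : ℂ))) with hv
    set S := ‖a‖ ^ 2 + ‖b‖ ^ 2 with hS
    have hvc : Continuous v := by fun_prop
    have hvb : ∀ x, ‖v x‖ ≤ ‖a‖ + ‖b‖ := fun x => by
      refine (norm_add_le _ _).trans (le_of_eq ?_)
      simp [Complex.norm_exp]
    have hdiff : Tendsto (fun x => ‖u x‖ ^ 2 - ‖v x‖ ^ 2) atTop (nhds 0) := by
      -- `| ‖u‖² - ‖v‖² | ≤ ‖u - v‖ (‖u - v‖ + 2 ‖v‖)`
      have hn := hasymp.norm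
      rw [norm_zero] at hn
      have hlim := hn.mul (hn.add_const (2 * (‖a‖ + ‖b‖)))
      rw [zero_mul] at hlim
      refine squeeze_zero_norm (fun x => ?_) hlim
      change |‖u x‖ ^ 2 - ‖v x‖ ^ 2| ≤ ‖u x - v x‖ * (‖u x - v x‖ + 2 * (‖a‖ + ‖b‖))
      rw [sq_sub_sq, abs_mul, mul_comm, abs_of_nonneg (by positivity : 0 ≤ ‖u x‖ + ‖v x‖)]
      have h1 := abs_norm_sub_norm_le (u x) (v x)
      have h2 := norm_sub_norm_le (u x) (v x)
      have h3 := hvb x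
      exact mul_le_mul h1 (by linarith) (by positivity) (norm_nonneg _)
    have hdc : ContinuousOn (fun x => ‖u x‖ ^ 2 - ‖v x‖ ^ 2) (Set.Ici 1) :=
      (hu.norm.pow 2).sub (hvc.norm.pow 2).continuousOn
    have h1 := tendsto_average_zero _ hdc hdiff
    have h2 := tendsto_average_osc ω hω (a * (starRingEnd ℂ) b)
    have h3 : Tendsto (fun R : ℝ => S - (1 / R) * S) atTop (nhds S) := by
      simpa using (hinv.mul_const S).const_sub S
    have hsum := (h1.add h2).add h3
    rw [zero_add, zero_add] at hsum
    refine hsum.congr' ?_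
    filter_upwards [eventually_ge_atTop 1] with R hR
    have hR0 : R ≠ 0 := by linarith
    have hsub : Set.uIcc 1 R ⊆ Set.Ici 1 := by
      rw [Set.uIcc_of_le hR]; exact Set.Icc_subset_Ici_self
    have hdec : ∫ x in (1:ℝ)..R, ‖u x‖ ^ 2 = (∫ x in (1:ℝ)..R, (‖u x‖ ^ 2 - ‖v x‖ ^ 2)) +
        (∫ x in (1:ℝ)..R, 2 * (a * (starRingEnd ℂ) b *
          Complex.exp (2 * Complex.I * (ω : ℂ) * (x : ℂ))).re) + ∫ x in (1:ℝ)..R, S := by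
      have i1 := (hdc.mono hsub).intervalIntegrable (μ := volume)
      have i2 : IntervalIntegrable (fun x : ℝ => 2 * (a * (starRingEnd ℂ) b *
          Complex.exp (2 * Complex.I * (ω : ℂ) * (x : ℂ))).re) volume 1 R :=
        Continuous.intervalIntegrable (by fun_prop) _ _
      rw [← intervalIntegral.integral_add i1 i2,
        ← intervalIntegral.integral_add (i1.add i2) intervalIntegrable_const]
      congr 1
      funext x
      have := norm_sq_add_exp ω a b x
      simp only [hv, hS]
      linarith
    rw [hdec, intervalIntegral.integral_const, smul_eq_mul]
    field_simp
  refine ⟨hmain, fun hab => ?_⟩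
  by_contra hfin
  have hI : IntegrableOn (fun x => ‖u x‖ ^ 2) (Set.Ioi 1) := by
    refine ⟨((hu.norm.pow 2).mono Set.Ioi_subset_Ici_self).aestronglyMeasurable
      measurableSet_Ioi, ?_⟩
    rw [hasFiniteIntegral_iff_ofReal (ae_of_all _ fun x => by positivity)]
    exact lt_top_iff_ne_top.2 hfin
  have hz := hinv.mul (intervalIntegral_tendsto_integral_Ioi 1 hI tendsto_id)
  rw [zero_mul] at hz
  have h0 : ‖a‖ ^ 2 + ‖b‖ ^ 2 = 0 := tendsto_nhds_unique hmain hz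
  refine hab ⟨?_, ?_⟩
  · exact norm_eq_zero.1 (pow_eq_zero_iff two_ne_zero |>.1
      (by nlinarith [sq_nonneg ‖a‖, sq_nonneg ‖b‖]))
  · exact norm_eq_zero.1 (pow_eq_zero_iff two_ne_zero |>.1
      (by nlinarith [sq_nonneg ‖a‖, sq_nonneg ‖b‖]))
end

section
/- Let M ∈ ℝ, Q ∈ ℝ with Q ≠ 0, let β ∈ ℝ with β ≠ 0, and let κ, λ ∈ ℝ. Define f(r) := 1 − 2M/r + Q²/r² and, on the set of r > 0 where rβ + λr² ≠ 0, define f_β(r) := f(r)/(rβ + λr²) and V^±(r) := ±β·f(r)·f_β′(r) + β²·f_β(r)² + κ·f_β(r). Then lim_{r → 0⁺} r⁶·V^+(r) = −2Q⁴ and lim_{r → 0⁺} r⁶·V^−(r) = 4Q⁴. -/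
/-! With `p(r) = r² − 2Mr + Q²` and `w(r) = β + λr` one has `f = p/r²` and `f_β = p/(r³w)`, so that
for small `r > 0` (where `w ≠ 0`, because `β ≠ 0`)
`r⁶ V = εβ p (p' r w − p (3w + λr)) / w² + β² p² / w² + κ r³ p / w`.
The right-hand side is continuous at `r = 0`, with value `(1 − 3ε) Q⁴`. -/

/-- The Reissner–Nordström lapse `f(r) = 1 − 2M/r + Q²/r²`. -/
noncomputable def rnf (M Q r : ℝ) : ℝ := 1 - 2 * M / r + Q ^ 2 / r ^ 2

/-- `f_β(r) = f(r)/(rβ + λr²)`. -/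
noncomputable def rnfb (M Q β lam r : ℝ) : ℝ := rnf M Q r / (r * β + lam * r ^ 2)

/-- The Dotti–Gleiser master potential
`V^{±}(r) = ±β·f(r)·f_β′(r) + β²·f_β(r)² + κ·f_β(r)`,
with the sign `±` encoded by `ε = ±1`. -/
noncomputable def dgV (M Q β κ lam ε r : ℝ) : ℝ :=
  ε * β * rnf M Q r * deriv (rnfb M Q β lam) r +
    β ^ 2 * rnfb M Q β lam r ^ 2 + κ * rnfb M Q β lam r

/-- The quotient rule for `f_β = p/(r³w)`, with `p = r² − 2Mr + Q²` and `w = β + λr`. -/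
theorem hasDerivAt_rnfb (M Q β lam r : ℝ) (hr : r ≠ 0) (hw : β + lam * r ≠ 0) :
    HasDerivAt (rnfb M Q β lam)
      (((2 * r - 2 * M) * r * (β + lam * r)
        - (r ^ 2 - 2 * M * r + Q ^ 2) * (3 * (β + lam * r) + lam * r))
        / (r ^ 4 * (β + lam * r) ^ 2)) r := by
  have hp : HasDerivAt (fun x : ℝ => x ^ 2 - 2 * M * x + Q ^ 2) (2 * r - 2 * M) r := by
    have h := (((hasDerivAt_id r).pow 2).sub ((hasDerivAt_id r).const_mul (2 * M))).add_const (Q ^ 2)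
    exact h.congr_deriv (by simp)
  have hq : HasDerivAt (fun x : ℝ => x ^ 3 * (β + lam * x))
      (3 * r ^ 2 * (β + lam * r) + r ^ 3 * lam) r := by
    have h := ((hasDerivAt_id r).pow 3).mul (((hasDerivAt_id r).const_mul lam).const_add β)
    exact h.congr_deriv (by simp)
  have h := hp.div hq (mul_ne_zero (pow_ne_zero 3 hr) hw)
  have heq : rnfb M Q β lam =ᶠ[nhds r]
      (fun x : ℝ => x ^ 2 - 2 * M * x + Q ^ 2) / (fun x : ℝ => x ^ 3 * (β + lam * x)) := by
    filter_upwards [isOpen_ne.mem_nhds hr] with x hx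
    have hx : x ≠ 0 := hx
    have h1 : x * β + lam * x ^ 2 = x * (β + lam * x) := by ring
    simp only [rnfb, rnf, Pi.div_apply, h1]
    rw [show 1 - 2 * M / x + Q ^ 2 / x ^ 2 = (x ^ 2 - 2 * M * x + Q ^ 2) / x ^ 2 by field_simp,
      div_div]
    congr 1
    ring
  refine (h.congr_of_eventuallyEq heq).congr_deriv ?_
  field_simp

/-- Both signs at once: the limit is `(1 − 3ε) Q⁴`. -/
theorem tendsto_dgV (M Q β κ lam ε : ℝ) (hβ : β ≠ 0) :
    Filter.Tendsto (fun r => r ^ 6 * dgV M Q β κ lam ε r)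
      (nhdsWithin 0 (Set.Ioi 0)) (nhds ((1 - 3 * ε) * Q ^ 4)) := by
  let g : ℝ → ℝ := fun r =>
    ε * β * (r ^ 2 - 2 * M * r + Q ^ 2) * ((2 * r - 2 * M) * r * (β + lam * r)
        - (r ^ 2 - 2 * M * r + Q ^ 2) * (3 * (β + lam * r) + lam * r)) / (β + lam * r) ^ 2
      + β ^ 2 * (r ^ 2 - 2 * M * r + Q ^ 2) ^ 2 / (β + lam * r) ^ 2
      + κ * r ^ 3 * (r ^ 2 - 2 * M * r + Q ^ 2) / (β + lam * r)
  have hg : ContinuousAt g 0 := by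
    have h0 : β + lam * 0 ≠ 0 := by simpa using hβ
    have h1 : (β + lam * 0) ^ 2 ≠ 0 := pow_ne_zero 2 h0
    fun_prop (disch := assumption)
  have hg0 : g 0 = (1 - 3 * ε) * Q ^ 4 := by
    simp only [g, mul_zero, add_zero]
    field_simp
    ring
  have hlim : Filter.Tendsto g (nhdsWithin 0 (Set.Ioi 0)) (nhds ((1 - 3 * ε) * Q ^ 4)) := by
    rw [← hg0]
    exact hg.tendsto.mono_left nhdsWithin_le_nhds
  refine hlim.congr' ?_
  have hw : ∀ᶠ r : ℝ in nhds 0, β + lam * r ≠ 0 := by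
    have hc : ContinuousAt (fun r : ℝ => β + lam * r) 0 := by fun_prop
    exact hc.eventually_ne (by simpa using hβ)
  filter_upwards [self_mem_nhdsWithin, nhdsWithin_le_nhds hw] with r hr hwr
  have hr : r ≠ 0 := ne_of_gt hr
  have hwr : β + lam * r ≠ 0 := hwr
  have h1 : r * β + lam * r ^ 2 = r * (β + lam * r) := by ring
  have h2 : 1 - 2 * M / r + Q ^ 2 / r ^ 2 = (r ^ 2 - 2 * M * r + Q ^ 2) / r ^ 2 := by field_simp
  simp only [g, dgV, (hasDerivAt_rnfb M Q β lam r hr hwr).deriv, rnfb, rnf, h1, h2]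
  field_simp

/-- Inverse-square cores of the Dotti–Gleiser master potentials in the
radial coordinate: `r⁶·V⁺(r) → −2Q⁴` and `r⁶·V⁻(r) → 4Q⁴` as `r → 0⁺`. -/
theorem stmt_17 (M Q β κ lam : ℝ) (hQ : Q ≠ 0) (hβ : β ≠ 0) :
    Filter.Tendsto (fun r => r ^ 6 * dgV M Q β κ lam 1 r)
        (nhdsWithin 0 (Set.Ioi 0)) (nhds (-2 * Q ^ 4)) ∧
    Filter.Tendsto (fun r => r ^ 6 * dgV M Q β κ lam (-1) r)
        (nhdsWithin 0 (Set.Ioi 0)) (nhds (4 * Q ^ 4)) := by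
  constructor
  · convert tendsto_dgV M Q β κ lam 1 hβ using 2
    ring
  · convert tendsto_dgV M Q β κ lam (-1) hβ using 2
    ring
end

section
/- Let M, Q ∈ ℝ with Q² > M² and Q ≠ 0, let x(r) := ∫₀^r s²/((s − M)² + (Q² − M²)) ds be the optical radius, and let V^± be as follows: for β ≠ 0 and κ, λ ∈ ℝ, f(r) := 1 − 2M/r + Q²/r², f_β(r) := f(r)/(rβ + λr²), V^±(r) := ±β·f(r)·f_β′(r) + β²·f_β(r)² + κ·f_β(r). Suppose δ > 0 and ρ : (0, δ) → (0, ∞) satisfies x(ρ(s)) = s for all s ∈ (0, δ) and ρ(s) → 0 as s → 0⁺. Then lim_{s → 0⁺} s²·V^+(ρ(s)) = −2/9 and lim_{s → 0⁺} s²·V^−(ρ(s)) = 4/9. -/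
/-- The optical radius `x(r) = ∫₀^r s²/((s−M)² + (Q²−M²)) ds`. -/
noncomputable def opticalX (M Q r : ℝ) : ℝ :=
  ∫ s in (0:ℝ)..r, s ^ 2 / ((s - M) ^ 2 + (Q ^ 2 - M ^ 2))

lemma denom_pos {M Q : ℝ} (hQM : Q ^ 2 > M ^ 2) (s : ℝ) :
    0 < (s - M) ^ 2 + (Q ^ 2 - M ^ 2) := by
  nlinarith [sq_nonneg (s - M)]

lemma continuous_integrand {M Q : ℝ} (hQM : Q ^ 2 > M ^ 2) :
    Continuous fun s : ℝ => s ^ 2 / ((s - M) ^ 2 + (Q ^ 2 - M ^ 2)) := by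
  refine Continuous.div (by fun_prop) (by fun_prop) fun s => (denom_pos hQM s).ne'

lemma hasDerivAt_opticalX {M Q : ℝ} (hQM : Q ^ 2 > M ^ 2) (r : ℝ) :
    HasDerivAt (opticalX M Q) (r ^ 2 / ((r - M) ^ 2 + (Q ^ 2 - M ^ 2))) r :=
  intervalIntegral.integral_hasDerivAt_right
    ((continuous_integrand hQM).intervalIntegrable _ _)
    (continuous_integrand hQM).stronglyMeasurable.stronglyMeasurableAtFilter
    (continuous_integrand hQM).continuousAt

/-- The optical radius vanishes cubically at the apex. -/
lemma tendsto_opticalX_div_cube {M Q : ℝ} (hQM : Q ^ 2 > M ^ 2) :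
    Filter.Tendsto (fun r => opticalX M Q r / r ^ 3) (nhdsWithin 0 (Set.Ioi 0))
      (nhds (1 / (3 * Q ^ 2))) := by
  refine HasDerivAt.lhopital_zero_nhdsGT
    (f' := fun r => r ^ 2 / ((r - M) ^ 2 + (Q ^ 2 - M ^ 2))) (g' := fun r => 3 * r ^ 2)
    (Filter.Eventually.of_forall fun r => hasDerivAt_opticalX hQM r)
    (Filter.Eventually.of_forall fun r => by simpa using hasDerivAt_pow 3 r) ?_ ?_ ?_ ?_
  · filter_upwards [self_mem_nhdsWithin] with r hr
    have : 0 < r := hr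
    positivity
  · have h := (hasDerivAt_opticalX hQM 0).continuousAt.tendsto
    have h0 : opticalX M Q 0 = 0 := by simp [opticalX]
    rw [h0] at h
    exact h.mono_left nhdsWithin_le_nhds
  · have h : ContinuousAt (fun r : ℝ => r ^ 3) 0 := by fun_prop
    have h := h.tendsto
    norm_num at h
    exact h.mono_left nhdsWithin_le_nhds
  · have hc : ContinuousAt (fun r : ℝ => 1 / (3 * ((r - M) ^ 2 + (Q ^ 2 - M ^ 2)))) 0 :=
      ContinuousAt.div (by fun_prop) (by fun_prop)
        (mul_pos three_pos (denom_pos hQM 0)).ne'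
    have h := hc.tendsto.mono_left (nhdsWithin_le_nhds (s := Set.Ioi 0))
    have h0 : 1 / (3 * ((0 - M) ^ 2 + (Q ^ 2 - M ^ 2))) = 1 / (3 * Q ^ 2) := by
      congr 2; ring
    rw [h0] at h
    refine h.congr' ?_
    filter_upwards [self_mem_nhdsWithin] with r hr
    have hr0 : r ≠ 0 := ne_of_gt hr
    have := (denom_pos hQM r).ne'
    field_simp

/-- The closed form of `r ^ 6 * V r`, in which the pole at the apex has been cancelled. -/
noncomputable def dgCore (M Q β κ lam ε r : ℝ) : ℝ :=
  (ε * β * (r ^ 2 - 2 * M * r + Q ^ 2) *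
      ((2 * r - 2 * M) * (β * r + lam * r ^ 2) -
        (r ^ 2 - 2 * M * r + Q ^ 2) * (3 * β + 4 * lam * r)) +
    β ^ 2 * (r ^ 2 - 2 * M * r + Q ^ 2) ^ 2 +
    κ * r ^ 3 * (r ^ 2 - 2 * M * r + Q ^ 2) * (β + lam * r)) / (β + lam * r) ^ 2

lemma rnfb_eq (M Q β lam : ℝ) {r : ℝ} (hr : r ≠ 0) :
    rnfb M Q β lam r = (r ^ 2 - 2 * M * r + Q ^ 2) / (β * r ^ 3 + lam * r ^ 4) := by
  have h : rnf M Q r = (r ^ 2 - 2 * M * r + Q ^ 2) / r ^ 2 := by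
    unfold rnf
    field_simp
  rw [rnfb, h, div_div]
  congr 1
  ring

lemma deriv_rnfb (M Q β lam : ℝ) {r : ℝ} (hr : r ≠ 0) (hb : β + lam * r ≠ 0) :
    deriv (rnfb M Q β lam) r =
      ((2 * r - 2 * M) * (β * r + lam * r ^ 2) -
        (r ^ 2 - 2 * M * r + Q ^ 2) * (3 * β + 4 * lam * r)) /
        (r ^ 4 * (β + lam * r) ^ 2) := by
  have hE : β * r ^ 3 + lam * r ^ 4 = r ^ 3 * (β + lam * r) := by ring
  have hE0 : β * r ^ 3 + lam * r ^ 4 ≠ 0 := hE ▸ mul_ne_zero (pow_ne_zero 3 hr) hb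
  have heq : rnfb M Q β lam =ᶠ[nhds r]
      fun r => (r ^ 2 - 2 * M * r + Q ^ 2) / (β * r ^ 3 + lam * r ^ 4) := by
    filter_upwards [isOpen_ne.mem_nhds hr] with y hy using rnfb_eq M Q β lam hy
  have hN : HasDerivAt (fun r : ℝ => r ^ 2 - 2 * M * r + Q ^ 2) (2 * r - 2 * M) r := by
    simpa using (((hasDerivAt_pow 2 r).fun_sub ((hasDerivAt_id r).const_mul (2 * M))).add_const
      (Q ^ 2))
  have hD : HasDerivAt (fun r : ℝ => β * r ^ 3 + lam * r ^ 4)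
      (β * (3 * r ^ 2) + lam * (4 * r ^ 3)) r := by
    simpa using (((hasDerivAt_pow 3 r).const_mul β).fun_add ((hasDerivAt_pow 4 r).const_mul lam))
  rw [heq.deriv_eq, (hN.fun_div hD hE0).deriv, hE]
  field_simp

lemma dgV_eq (M Q β κ lam ε : ℝ) {r : ℝ} (hr : r ≠ 0) (hb : β + lam * r ≠ 0) :
    r ^ 6 * dgV M Q β κ lam ε r = dgCore M Q β κ lam ε r := by
  have hE : β * r ^ 3 + lam * r ^ 4 = r ^ 3 * (β + lam * r) := by ring
  have hf : rnf M Q r = (r ^ 2 - 2 * M * r + Q ^ 2) / r ^ 2 := by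
    unfold rnf
    field_simp
  rw [dgV, deriv_rnfb M Q β lam hr hb, rnfb_eq M Q β lam hr, hf, hE, dgCore]
  field_simp

lemma tendsto_dgCore (M Q κ lam ε : ℝ) {β : ℝ} (hβ : β ≠ 0) :
    Filter.Tendsto (dgCore M Q β κ lam ε) (nhds 0) (nhds ((1 - 3 * ε) * Q ^ 4)) := by
  have hc : ContinuousAt (dgCore M Q β κ lam ε) 0 := by
    unfold dgCore
    exact ContinuousAt.div (by fun_prop) (by fun_prop) (by simpa using hβ)
  have h0 : dgCore M Q β κ lam ε 0 = (1 - 3 * ε) * Q ^ 4 := by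
    unfold dgCore
    simp only [mul_zero, add_zero]
    field_simp
    ring
  rw [← h0]
  exact hc.tendsto

/-- The inverse-square core for an arbitrary sign parameter `ε`. -/
lemma tendsto_core (M Q β κ lam δ ε : ℝ) (hQM : Q ^ 2 > M ^ 2) (hβ : β ≠ 0)
    (hδ : 0 < δ) (ρ : ℝ → ℝ)
    (hρpos : ∀ s ∈ Set.Ioo (0:ℝ) δ, 0 < ρ s)
    (hρinv : ∀ s ∈ Set.Ioo (0:ℝ) δ, opticalX M Q (ρ s) = s)
    (hρ0 : Filter.Tendsto ρ (nhdsWithin 0 (Set.Ioi 0)) (nhds 0)) :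
    Filter.Tendsto (fun s => s ^ 2 * dgV M Q β κ lam ε (ρ s))
        (nhdsWithin 0 (Set.Ioi 0)) (nhds ((1 - 3 * ε) / 9)) := by
  have hQ : Q ≠ 0 := by
    rintro rfl
    nlinarith [sq_nonneg M]
  have hmem : Set.Ioo (0:ℝ) δ ∈ nhdsWithin (0:ℝ) (Set.Ioi 0) := Ioo_mem_nhdsGT hδ
  have hρ : Filter.Tendsto ρ (nhdsWithin 0 (Set.Ioi 0)) (nhdsWithin 0 (Set.Ioi 0)) :=
    tendsto_nhdsWithin_iff.2 ⟨hρ0, by filter_upwards [hmem] with s hs using hρpos s hs⟩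
  have hb : ∀ᶠ s in nhdsWithin (0:ℝ) (Set.Ioi 0), β + lam * ρ s ≠ 0 := by
    have hc : ContinuousAt (fun r : ℝ => β + lam * r) 0 := by fun_prop
    exact hρ0.eventually (hc.eventually_ne (by simpa using hβ))
  have h := (((tendsto_opticalX_div_cube hQM).comp hρ).pow 2).mul
    ((tendsto_dgCore M Q κ lam ε hβ).comp hρ0)
  have hv : (1 / (3 * Q ^ 2)) ^ 2 * ((1 - 3 * ε) * Q ^ 4) = (1 - 3 * ε) / 9 := by
    field_simp
    ring
  rw [hv] at h
  refine h.congr' ?_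
  filter_upwards [hmem, hb] with s hs hbs
  have hr := (hρpos s hs).ne'
  simp only [Function.comp_apply, hρinv s hs, ← dgV_eq M Q β κ lam ε hr hbs]
  field_simp

/-- Inverse-square Hardy cores of the master potentials in the optical
coordinate. If `ρ` is the local inverse of the optical radius near the apex, then
`s²·V⁺(ρ(s)) → −2/9` and `s²·V⁻(ρ(s)) → 4/9` as `s → 0⁺`. -/
theorem stmt_18 (M Q β κ lam δ : ℝ) (hQM : Q ^ 2 > M ^ 2) (hβ : β ≠ 0)
    (hδ : 0 < δ) (ρ : ℝ → ℝ)
    (hρpos : ∀ s ∈ Set.Ioo (0:ℝ) δ, 0 < ρ s)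
    (hρinv : ∀ s ∈ Set.Ioo (0:ℝ) δ, opticalX M Q (ρ s) = s)
    (hρ0 : Filter.Tendsto ρ (nhdsWithin 0 (Set.Ioi 0)) (nhds 0)) :
    Filter.Tendsto (fun s => s ^ 2 * dgV M Q β κ lam 1 (ρ s))
        (nhdsWithin 0 (Set.Ioi 0)) (nhds (-2 / 9)) ∧
    Filter.Tendsto (fun s => s ^ 2 * dgV M Q β κ lam (-1) (ρ s))
        (nhdsWithin 0 (Set.Ioi 0)) (nhds (4 / 9)) := by
  have key := fun ε => tendsto_core M Q β κ lam δ ε hQM hβ hδ ρ hρpos hρinv hρ0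
  have h₁ := key 1
  have h₂ := key (-1)
  norm_num at h₁ h₂ ⊢
  exact ⟨h₁, h₂⟩
end

section
/- Let V : (0, 1) → ℝ satisfy lim_{x → 0⁺} x²·V(x) = −2/9, let C ∈ ℝ with C ≠ 0, and let u : (0, 1) → ℝ be continuously differentiable with lim_{x → 0⁺} u(x)/x^{1/3} = C and lim_{x → 0⁺} x^{2/3}·u′(x) = C/3. Then for every ε ∈ (0, 1), the function x ↦ u′(x)² + V(x)·u(x)² is not Lebesgue integrable on (0, ε); in particular the local T-energy ∫₀^ε (u′(x)² + V(x)u(x)²) dx diverges. -/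
/-!
Multiplying the energy density by `x^{4/3}` separates it into factors with known limits:
`x^{4/3} (u'² + V u²) = (x^{2/3} u')² + (x² V) (u / x^{1/3})² → C²/9 - 2C²/9 = -C²/9 ≠ 0`.
Hence near `0⁺` the density is bounded above by `-(C²/18) x^{-4/3}`, and `x^{-4/3}` is not
integrable at `0`, by `intervalIntegral.integrableOn_Ioo_rpow_iff`.
-/

open MeasureTheory Filter

/-- Divergent T-energy of the Dotti–Gleiser algebraic special mode.
If `x²V(x) → −2/9` as `x → 0⁺`, `C ≠ 0`, and `u` is C¹ on `(0,1)` with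
`u(x)/x^{1/3} → C` and `x^{2/3}u′(x) → C/3` as `x → 0⁺`, then for every
`ε ∈ (0,1)` the function `u′² + V u²` is not Lebesgue integrable on `(0, ε)`. -/
theorem stmt_19 (V : ℝ → ℝ)
    (hV : Tendsto (fun x => x ^ 2 * V x) (nhdsWithin 0 (Set.Ioi 0)) (nhds (-2/9)))
    (C : ℝ) (hC : C ≠ 0) (u : ℝ → ℝ)
    (hud : ∀ x ∈ Set.Ioo (0:ℝ) 1, DifferentiableAt ℝ u x)
    (huc : ContinuousOn (deriv u) (Set.Ioo 0 1))
    (hu0 : Tendsto (fun x => u x / x ^ ((1:ℝ)/3))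
        (nhdsWithin 0 (Set.Ioi 0)) (nhds C))
    (hu0' : Tendsto (fun x => x ^ ((2:ℝ)/3) * deriv u x)
        (nhdsWithin 0 (Set.Ioi 0)) (nhds (C / 3))) :
    ∀ ε ∈ Set.Ioo (0:ℝ) 1,
      ¬ IntegrableOn (fun x => deriv u x ^ 2 + V x * u x ^ 2) (Set.Ioo 0 ε) := by
  rintro ε ⟨hε, -⟩ hint
  have hC2 : 0 < C ^ 2 := by positivity
  have hlim := (hu0'.pow 2).add (hV.mul (hu0.pow 2))
  have hlt : (C / 3) ^ 2 + -2 / 9 * C ^ 2 < -(C ^ 2 / 18) := by nlinarith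
  obtain ⟨δ, hδ, hδb⟩ := mem_nhdsGT_iff_exists_Ioo_subset.mp (hlim.eventually_lt_const hlt)
  have hδ0 : (0:ℝ) < δ := hδ
  have hm : 0 < min δ ε := lt_min hδ0 hε
  have hint' := hint.mono_set (Set.Ioo_subset_Ioo_right (min_le_right δ ε))
  have hbad : IntegrableOn (fun x : ℝ => x ^ (-(4:ℝ)/3)) (Set.Ioo 0 (min δ ε)) := by
    refine Integrable.mono' (hint'.neg.const_mul (18 / C ^ 2))
      (by fun_prop : Measurable fun x : ℝ => x ^ (-(4:ℝ)/3)).aestronglyMeasurable ?_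
    filter_upwards [ae_restrict_mem measurableSet_Ioo] with x hx
    have hx0 : 0 < x := hx.1
    have hb : (x ^ ((2:ℝ)/3) * deriv u x) ^ 2 + x ^ 2 * V x * (u x / x ^ ((1:ℝ)/3)) ^ 2
        < -(C ^ 2 / 18) := hδb ⟨hx0, hx.2.trans_le (min_le_left _ _)⟩
    -- All powers of `x` are expressed through `t = x^{1/3}`.
    obtain ⟨t, ht⟩ : ∃ t, t = x ^ ((1:ℝ)/3) := ⟨_, rfl⟩
    have ht0 : 0 < t := ht ▸ Real.rpow_pos_of_pos hx0 _
    have h2 : x ^ ((2:ℝ)/3) = t ^ 2 := by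
      rw [ht, ← Real.rpow_mul_natCast hx0.le]; norm_num
    have h3 : x = t ^ 3 := by
      rw [ht, ← Real.rpow_mul_natCast hx0.le]; norm_num
    have h4 : x ^ (-(4:ℝ)/3) = (t ^ 4)⁻¹ := by
      rw [ht, ← Real.rpow_mul_natCast hx0.le, ← Real.rpow_neg hx0.le]; norm_num
    have hkey : (x ^ ((2:ℝ)/3) * deriv u x) ^ 2 + x ^ 2 * V x * (u x / x ^ ((1:ℝ)/3)) ^ 2
        = t ^ 4 * (deriv u x ^ 2 + V x * u x ^ 2) := by
      have hx2 : x ^ 2 = t ^ 6 := by rw [h3]; ring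
      rw [h2, ← ht, hx2]
      field_simp
    rw [hkey] at hb
    rw [h4, Real.norm_of_nonneg (by positivity), inv_le_iff_one_le_mul₀ (by positivity)]
    simp only [Pi.neg_apply]
    calc (1:ℝ) = 18 / C ^ 2 * (C ^ 2 / 18) := by field_simp
      _ ≤ 18 / C ^ 2 * -(t ^ 4 * (deriv u x ^ 2 + V x * u x ^ 2)) := by
        gcongr; linarith
      _ = _ := by ring
  have hexp := (intervalIntegral.integrableOn_Ioo_rpow_iff hm).mp hbad
  norm_num at hexp
end
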